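/- arXiv:1609.00966 — 2 statements merged into one kernel-verified Lean document; each statement's English description precedes it below -/
import Mathlib

section
/- Assume in addition that D is invertible and that Δ + b·Q*Q is invertible, where Δ = 𝔔 − 𝔔 Q₋ S Q₋* 𝔔, and set C = (Δ + b·Q*Q)⁻¹. Then Š = S + S Q₋* 𝔔 C 𝔔 Q₋ S, where S = (D + Q₋*𝔔Q₋)⁻¹ and Š = (D + Q̌₋*𝔔̌Q̌₋)⁻¹. -/
open RealInnerProductSpace

/-!
Two applications of the Woodbury identity. Write `K = 𝔔 + b Q*Q`. The first application expands
`𝔔̌` and gives `Q* 𝔔̌ Q = 𝔔 - 𝔔 K⁻¹ 𝔔`. Hence, with `A = D + Q₋* 𝔔 Q₋`, the operator whose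
inverse is `Š` equals `A - (Q₋* 𝔔) K⁻¹ (𝔔 Q₋)`, and the second application inverts it: the Schur
complement that appears is `K - (𝔔 Q₋) A⁻¹ (Q₋* 𝔔) = Δ + b Q*Q`.
-/

section Woodbury

open scoped Ring

/-- Both sides are the parallel sum `a * (a + p)⁻¹ * p`. -/
theorem sub_mul_inverse_add_mul_self {A : Type*} [Ring A] {a p : A} (h : IsUnit (a + p)) :
    p - p * (a + p)⁻¹ʳ * p = a - a * (a + p)⁻¹ʳ * a := by
  have hleft : p - p * (a + p)⁻¹ʳ * p = a * (a + p)⁻¹ʳ * p := by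
    rw [sub_eq_iff_eq_add, ← add_mul, ← add_mul, Ring.mul_inverse_cancel _ h, one_mul]
  have hright : a - a * (a + p)⁻¹ʳ * a = a * (a + p)⁻¹ʳ * p := by
    rw [sub_eq_iff_eq_add, ← mul_add, add_comm p a, Ring.inverse_mul_cancel_right _ _ h]
  rw [hleft, hright]

theorem inverse_smul_one {K A : Type*} [Field K] [Ring A] [Algebra K A] (c : K) :
    (c • (1 : A))⁻¹ʳ = c⁻¹ • (1 : A) := by
  rcases eq_or_ne c 0 with rfl | hc
  · simp only [zero_smul, inv_zero, Ring.inverse_zero]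
  · exact Ring.inverse_unit (Units.mk0 c hc • (1 : Aˣ))

variable {R M N P : Type*} [Ring R] [AddCommGroup M] [Module R M] [AddCommGroup N] [Module R N]
  [AddCommGroup P] [Module R P]

theorem comp_inverse_comp_cancel {A : Module.End R M} (hA : IsUnit A) (f : N →ₗ[R] M) :
    A ∘ₗ A⁻¹ʳ ∘ₗ f = f := by
  rw [← LinearMap.comp_assoc, ← Module.End.mul_eq_comp, Ring.mul_inverse_cancel A hA,
    Module.End.one_eq_id, LinearMap.id_comp]

theorem inverse_comp_comp_cancel {A : Module.End R M} (hA : IsUnit A) (f : N →ₗ[R] M) :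
    A⁻¹ʳ ∘ₗ A ∘ₗ f = f := by
  rw [← LinearMap.comp_assoc, ← Module.End.mul_eq_comp, Ring.inverse_mul_cancel A hA,
    Module.End.one_eq_id, LinearMap.id_comp]

/-- The **Woodbury identity**; see `Matrix.add_mul_mul_inv_eq_sub` for matrices. -/
theorem inverse_add_comp_inverse_comp {A : Module.End R M} {G : Module.End R N}
    {U : N →ₗ[R] M} {V : M →ₗ[R] N} (hA : IsUnit A) (hG : IsUnit G)
    (hK : IsUnit (G + V ∘ₗ A⁻¹ʳ ∘ₗ U)) :
    (A + U ∘ₗ G⁻¹ʳ ∘ₗ V)⁻¹ʳ = A⁻¹ʳ - A⁻¹ʳ ∘ₗ U ∘ₗ (G + V ∘ₗ A⁻¹ʳ ∘ₗ U)⁻¹ʳ ∘ₗ V ∘ₗ A⁻¹ʳ := by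
  set X := A + U ∘ₗ G⁻¹ʳ ∘ₗ V with hX
  set K := G + V ∘ₗ A⁻¹ʳ ∘ₗ U with hK_def
  have hAinv : A ∘ₗ A⁻¹ʳ = 1 := Ring.mul_inverse_cancel A hA
  have hinvA : A⁻¹ʳ ∘ₗ A = 1 := Ring.inverse_mul_cancel A hA
  have push_right : X ∘ₗ A⁻¹ʳ ∘ₗ U = U ∘ₗ G⁻¹ʳ ∘ₗ K := by
    have hinvG : G⁻¹ʳ ∘ₗ G = 1 := Ring.inverse_mul_cancel G hG
    simp only [hX, hK_def, LinearMap.add_comp, LinearMap.comp_add, LinearMap.comp_assoc,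
      comp_inverse_comp_cancel hA, hinvG, Module.End.one_eq_id, LinearMap.comp_id]
  have push_left : K ∘ₗ G⁻¹ʳ ∘ₗ V = V ∘ₗ A⁻¹ʳ ∘ₗ X := by
    simp only [hX, hK_def, LinearMap.add_comp, LinearMap.comp_add, LinearMap.comp_assoc,
      comp_inverse_comp_cancel hG, hinvA, Module.End.one_eq_id, LinearMap.comp_id]
  have right_inv : X * (A⁻¹ʳ - A⁻¹ʳ ∘ₗ U ∘ₗ K⁻¹ʳ ∘ₗ V ∘ₗ A⁻¹ʳ) = 1 := calc
    _ = X ∘ₗ A⁻¹ʳ - (X ∘ₗ A⁻¹ʳ ∘ₗ U) ∘ₗ K⁻¹ʳ ∘ₗ V ∘ₗ A⁻¹ʳ := by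
      simp only [Module.End.mul_eq_comp, LinearMap.comp_sub, LinearMap.comp_assoc]
    _ = (1 + U ∘ₗ G⁻¹ʳ ∘ₗ V ∘ₗ A⁻¹ʳ) - U ∘ₗ G⁻¹ʳ ∘ₗ V ∘ₗ A⁻¹ʳ := by
      rw [push_right, hX, LinearMap.add_comp, hAinv]
      simp only [LinearMap.comp_assoc, comp_inverse_comp_cancel hK]
    _ = 1 := add_sub_cancel_right _ _
  have left_inv : (A⁻¹ʳ - A⁻¹ʳ ∘ₗ U ∘ₗ K⁻¹ʳ ∘ₗ V ∘ₗ A⁻¹ʳ) * X = 1 := calc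
    _ = A⁻¹ʳ ∘ₗ X - A⁻¹ʳ ∘ₗ U ∘ₗ K⁻¹ʳ ∘ₗ V ∘ₗ A⁻¹ʳ ∘ₗ X := by
      simp only [Module.End.mul_eq_comp, LinearMap.sub_comp, LinearMap.comp_assoc]
    _ = (1 + A⁻¹ʳ ∘ₗ U ∘ₗ G⁻¹ʳ ∘ₗ V) - A⁻¹ʳ ∘ₗ U ∘ₗ G⁻¹ʳ ∘ₗ V := by
      rw [← push_left, inverse_comp_comp_cancel hK, hX, LinearMap.comp_add, hinvA]
    _ = 1 := add_sub_cancel_right _ _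
  exact Ring.inverse_unit (⟨X, _, right_inv, left_inv⟩ : (Module.End R M)ˣ)

theorem inverse_sub_comp_inverse_comp {A : Module.End R M} {G : Module.End R N}
    {U : N →ₗ[R] M} {V : M →ₗ[R] N} (hA : IsUnit A) (hG : IsUnit G)
    (hK : IsUnit (G - V ∘ₗ A⁻¹ʳ ∘ₗ U)) :
    (A - U ∘ₗ G⁻¹ʳ ∘ₗ V)⁻¹ʳ = A⁻¹ʳ + A⁻¹ʳ ∘ₗ U ∘ₗ (G - V ∘ₗ A⁻¹ʳ ∘ₗ U)⁻¹ʳ ∘ₗ V ∘ₗ A⁻¹ʳ := by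
  simpa only [LinearMap.neg_comp, LinearMap.comp_neg, ← sub_eq_add_neg, sub_neg_eq_add] using
    inverse_add_comp_inverse_comp (V := -V) hA hG
      (by simpa only [LinearMap.neg_comp, ← sub_eq_add_neg] using hK)

theorem comp_inverse_add_comp_inverse_comp_comp {A : Module.End R M} {B : Module.End R N}
    {U : M →ₗ[R] N} {V : N →ₗ[R] M} (hA : IsUnit A) (hB : IsUnit B)
    (hK : IsUnit (A + V ∘ₗ B ∘ₗ U)) :
    V ∘ₗ (B⁻¹ʳ + U ∘ₗ A⁻¹ʳ ∘ₗ V)⁻¹ʳ ∘ₗ U = A - A ∘ₗ (A + V ∘ₗ B ∘ₗ U)⁻¹ʳ ∘ₗ A := by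
  have woodbury : (B⁻¹ʳ + U ∘ₗ A⁻¹ʳ ∘ₗ V)⁻¹ʳ = B - B ∘ₗ U ∘ₗ (A + V ∘ₗ B ∘ₗ U)⁻¹ʳ ∘ₗ V ∘ₗ B := by
    simpa only [Ring.inverse_inverse hB] using
      inverse_add_comp_inverse_comp (A := B⁻¹ʳ) (U := U) (V := V) hB.ringInverse hA
        (by rwa [Ring.inverse_inverse hB])
  simpa only [woodbury, Module.End.mul_eq_comp, LinearMap.comp_sub, LinearMap.sub_comp,
    LinearMap.comp_assoc] using sub_mul_inverse_add_mul_self hK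

/-- `Qm'` and `Q'` take the place of the adjoints of `Qm` and `Q`, and `B` that of the scalar `b`. -/
theorem stmt_15_general {Qm : M →ₗ[R] N} {Qm' : N →ₗ[R] M} {Q : N →ₗ[R] P} {Q' : P →ₗ[R] N}
    {B : Module.End R P} {Qf : Module.End R N} {D : Module.End R M}
    (hB : IsUnit B) (hQf : IsUnit Qf) (hK : IsUnit (Qf + Q' ∘ₗ B ∘ₗ Q))
    (hDQ : IsUnit (D + Qm' ∘ₗ Qf ∘ₗ Qm))
    {S : Module.End R M} (hS : S = (D + Qm' ∘ₗ Qf ∘ₗ Qm)⁻¹ʳ)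
    {Δ : Module.End R N} (hΔ : Δ = Qf - Qf ∘ₗ Qm ∘ₗ S ∘ₗ Qm' ∘ₗ Qf)
    (hΔB : IsUnit (Δ + Q' ∘ₗ B ∘ₗ Q)) :
    (D + (Qm' ∘ₗ Q') ∘ₗ (B⁻¹ʳ + Q ∘ₗ Qf⁻¹ʳ ∘ₗ Q')⁻¹ʳ ∘ₗ Q ∘ₗ Qm)⁻¹ʳ =
      S + S ∘ₗ Qm' ∘ₗ Qf ∘ₗ (Δ + Q' ∘ₗ B ∘ₗ Q)⁻¹ʳ ∘ₗ Qf ∘ₗ Qm ∘ₗ S := by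
  set K := Qf + Q' ∘ₗ B ∘ₗ Q with hK_def
  have perturbation : D + (Qm' ∘ₗ Q') ∘ₗ (B⁻¹ʳ + Q ∘ₗ Qf⁻¹ʳ ∘ₗ Q')⁻¹ʳ ∘ₗ Q ∘ₗ Qm =
      (D + Qm' ∘ₗ Qf ∘ₗ Qm) - (Qm' ∘ₗ Qf) ∘ₗ K⁻¹ʳ ∘ₗ (Qf ∘ₗ Qm) := calc
    _ = D + Qm' ∘ₗ (Q' ∘ₗ (B⁻¹ʳ + Q ∘ₗ Qf⁻¹ʳ ∘ₗ Q')⁻¹ʳ ∘ₗ Q) ∘ₗ Qm := by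
      simp only [LinearMap.comp_assoc]
    _ = _ := by
      rw [comp_inverse_add_comp_inverse_comp_comp hQf hB hK]
      simp only [LinearMap.sub_comp, LinearMap.comp_sub, LinearMap.comp_assoc, add_sub_assoc,
        ← hK_def]
  have schur_complement :
      K - (Qf ∘ₗ Qm) ∘ₗ (D + Qm' ∘ₗ Qf ∘ₗ Qm)⁻¹ʳ ∘ₗ (Qm' ∘ₗ Qf) = Δ + Q' ∘ₗ B ∘ₗ Q := by
    rw [hΔ, hS, hK_def, LinearMap.comp_assoc]
    abel
  rw [perturbation, inverse_sub_comp_inverse_comp hDQ hK (schur_complement ▸ hΔB),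
    schur_complement, ← hS]
  simp only [LinearMap.comp_assoc]

end Woodbury

theorem isUnit_of_inner_map_self_ne_zero {𝕜 E : Type*} [RCLike 𝕜] [NormedAddCommGroup E]
    [InnerProductSpace 𝕜 E] [FiniteDimensional 𝕜 E] {T : Module.End 𝕜 E}
    (hT : ∀ x, x ≠ 0 → inner 𝕜 (T x) x ≠ 0) : IsUnit T := by
  rw [LinearMap.isUnit_iff_ker_eq_bot, LinearMap.ker_eq_bot']
  intro x hx
  by_contra hx0
  exact hT x hx0 (by rw [hx, inner_zero_left])

theorem inner_add_smul_adjoint_comp_self_pos {E F : Type*}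
    [NormedAddCommGroup E] [InnerProductSpace ℝ E] [FiniteDimensional ℝ E]
    [NormedAddCommGroup F] [InnerProductSpace ℝ F] [FiniteDimensional ℝ F]
    {T : Module.End ℝ E} {b : ℝ} (hb : 0 ≤ b) (Q : E →ₗ[ℝ] F) {x : E} (hx : 0 < ⟪T x, x⟫) :
    0 < ⟪(T + b • (LinearMap.adjoint Q ∘ₗ Q)) x, x⟫ := by
  have hQ : 0 ≤ b * ⟪Q x, Q x⟫ := mul_nonneg hb real_inner_self_nonneg
  simpa only [LinearMap.add_apply, LinearMap.smul_apply, LinearMap.comp_apply, inner_add_left,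
    real_inner_smul_left, LinearMap.adjoint_inner_left] using add_pos_of_pos_of_nonneg hx hQ

/-- Remark, part (c), second representation: `Š = S + S Q₋* 𝔔 C 𝔔 Q₋ S`. -/
theorem stmt_15
    {Hm H Hp : Type*}
    [NormedAddCommGroup Hm] [InnerProductSpace ℝ Hm] [FiniteDimensional ℝ Hm]
    [NormedAddCommGroup H] [InnerProductSpace ℝ H] [FiniteDimensional ℝ H]
    [NormedAddCommGroup Hp] [InnerProductSpace ℝ Hp] [FiniteDimensional ℝ Hp]
    (Qm : Hm →ₗ[ℝ] H) (Q : H →ₗ[ℝ] Hp)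
    (b : ℝ) (hb : 0 < b)
    (Qf : Module.End ℝ H) (hQfsym : Qf.IsSymmetric)
    (hQfpos : ∀ x : H, x ≠ 0 → 0 < ⟪Qf x, x⟫)
    (Qfc : Module.End ℝ Hp)
    (hQfc : Qfc = Ring.inverse
      (b⁻¹ • (1 : Module.End ℝ Hp)
        + Q ∘ₗ Ring.inverse Qf ∘ₗ LinearMap.adjoint Q))
    (D : Module.End ℝ Hm)
    (hDQ : IsUnit (D + LinearMap.adjoint Qm ∘ₗ Qf ∘ₗ Qm))
    (hDQc : IsUnit (D + LinearMap.adjoint (Q ∘ₗ Qm) ∘ₗ Qfc ∘ₗ (Q ∘ₗ Qm)))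
    (S : Module.End ℝ Hm)
    (hS : S = Ring.inverse (D + LinearMap.adjoint Qm ∘ₗ Qf ∘ₗ Qm))
    (Sc : Module.End ℝ Hm)
    (hSc : Sc = Ring.inverse (D + LinearMap.adjoint (Q ∘ₗ Qm) ∘ₗ Qfc ∘ₗ (Q ∘ₗ Qm)))
    (hD : IsUnit D)
    (Δ : Module.End ℝ H)
    (hΔ : Δ = Qf - Qf ∘ₗ Qm ∘ₗ S ∘ₗ LinearMap.adjoint Qm ∘ₗ Qf)
    (hΔb : IsUnit (Δ + b • (LinearMap.adjoint Q ∘ₗ Q)))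
    (C : Module.End ℝ H)
    (hC : C = Ring.inverse (Δ + b • (LinearMap.adjoint Q ∘ₗ Q))) :
    Sc = S + S ∘ₗ LinearMap.adjoint Qm ∘ₗ Qf ∘ₗ C ∘ₗ Qf ∘ₗ Qm ∘ₗ S := by
  subst hQfc hSc hC
  have hB : IsUnit (b • (1 : Module.End ℝ Hp)) :=
    isUnit_one.smul (Units.mk0 b hb.ne')
  have hBQ : LinearMap.adjoint Q ∘ₗ (b • (1 : Module.End ℝ Hp)) ∘ₗ Q =
      b • (LinearMap.adjoint Q ∘ₗ Q) := by
    rw [LinearMap.smul_comp, LinearMap.comp_smul, Module.End.one_eq_id, LinearMap.id_comp]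
  have hQf : IsUnit Qf := isUnit_of_inner_map_self_ne_zero fun x hx ↦ (hQfpos x hx).ne'
  have hK : IsUnit (Qf + b • (LinearMap.adjoint Q ∘ₗ Q)) :=
    isUnit_of_inner_map_self_ne_zero fun x hx ↦
      (inner_add_smul_adjoint_comp_self_pos hb.le Q (hQfpos x hx)).ne'
  rw [LinearMap.adjoint_comp, ← inverse_smul_one, ← hBQ]
  rw [← hBQ] at hK hΔb
  exact stmt_15_general hB hQf hK hDQ hS hΔ hΔb
end

section
/- Assume in addition that D is invertible and that Δ + b·Q*Q is invertible, where Δ = 𝔔 − 𝔔 Q₋ S Q₋* 𝔔, and set C = (Δ + b·Q*Q)⁻¹. Then b·C·Q* = (b·Q*Q + 𝔔)⁻¹ ( b·Q* + 𝔔 Q₋ Š Q̌₋* 𝔔̌ ), as linear maps from H₊ to H, where S = (D + Q₋*𝔔Q₋)⁻¹ and Š = (D + Q̌₋*𝔔̌Q̌₋)⁻¹. -/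
open RealInnerProductSpace

/-! Writing `K = b·id` and `A = Q*KQ + 𝔔`, the operators `Δ + Q*KQ` and `D + Q̌₋*𝔔̌Q̌₋` are the two
Schur complements of the block operator with rows `(A, 𝔔Q₋)` and `(Q₋*𝔔, D + Q₋*𝔔Q₋)`. For the
second one this uses `𝔔 - 𝔔A⁻¹𝔔 = Q*𝔔̌Q`, a consequence of the push-through identity
`𝔔A⁻¹Q*K = Q*𝔔̌`. Block inversion therefore gives `C = A⁻¹ + A⁻¹𝔔Q₋ŠQ₋*𝔔A⁻¹`, and composing with
`Q*K` and pushing through once more yields the formula. -/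

open scoped Ring

section Inverse

variable {R M N : Type*} [Semiring R] [AddCommMonoid M] [Module R M] [AddCommMonoid N] [Module R N]
  {A : Module.End R M} {B : Module.End R N}

theorem apply_ringInverse_apply (hA : IsUnit A) (x : M) : A (A⁻¹ʳ x) = x :=
  LinearMap.congr_fun (Ring.mul_inverse_cancel A hA) x

theorem ringInverse_apply_apply (hA : IsUnit A) (x : M) : A⁻¹ʳ (A x) = x :=
  LinearMap.congr_fun (Ring.inverse_mul_cancel A hA) x

theorem ringInverse_comp_eq_comp_ringInverse (hA : IsUnit A) (hB : IsUnit B) {f g : N →ₗ[R] M}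
    (h : f ∘ₗ B = A ∘ₗ g) : A⁻¹ʳ ∘ₗ f = g ∘ₗ B⁻¹ʳ := by
  ext y
  have hy : f y = A (g (B⁻¹ʳ y)) := by
    simpa only [LinearMap.comp_apply, apply_ringInverse_apply hB] using
      LinearMap.congr_fun h (B⁻¹ʳ y)
  rw [LinearMap.comp_apply, hy, ringInverse_apply_apply hA, LinearMap.comp_apply]

theorem ringInverse_smul_one {k S : Type*} [Semifield k] [Semiring S] [Algebra k S] (c : k) :
    (c • (1 : S))⁻¹ʳ = c⁻¹ • 1 := by
  obtain rfl | hc := eq_or_ne c 0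
  · rw [zero_smul, inv_zero, zero_smul, Ring.inverse_zero]
  · refine left_inv_eq_right_inv
      (Ring.inverse_mul_cancel _ (isUnit_one.smul (Units.mk0 c hc))) ?_
    rw [smul_mul_smul_comm, mul_inv_cancel₀ hc, one_mul, one_smul]

end Inverse

section SchurComplement

variable {R M N : Type*} [Ring R] [AddCommGroup M] [Module R M] [AddCommGroup N] [Module R N]

/-- The Schur complement `A - U T⁻¹ V` of the lower right entry `T` in the block operator with rows
`(A, U)` and `(V, T)`. The complement of `A` in the same operator is `schurComplement T V A U`.
The inverse is `Ring.inverse`, so that the definition is meaningful only for invertible `T`. -/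
noncomputable def schurComplement (A : Module.End R M) (U : N →ₗ[R] M) (T : Module.End R N)
    (V : M →ₗ[R] N) : Module.End R M :=
  A - U ∘ₗ T⁻¹ʳ ∘ₗ V

variable {A : Module.End R M} {U : N →ₗ[R] M} {T : Module.End R N} {V : M →ₗ[R] N}

theorem schurComplement_comp_ringInverse_comp (hA : IsUnit A) (hT : IsUnit T) :
    schurComplement A U T V ∘ₗ A⁻¹ʳ ∘ₗ U = U ∘ₗ T⁻¹ʳ ∘ₗ schurComplement T V A U := by
  ext y
  simp only [schurComplement, LinearMap.comp_apply, LinearMap.sub_apply, map_sub,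
    apply_ringInverse_apply hA, ringInverse_apply_apply hT]

theorem schurComplement_mul_eq_one (hA : IsUnit A) (hT : IsUnit T)
    (hS : IsUnit (schurComplement T V A U)) :
    schurComplement A U T V *
      (A⁻¹ʳ + A⁻¹ʳ ∘ₗ U ∘ₗ (schurComplement T V A U)⁻¹ʳ ∘ₗ V ∘ₗ A⁻¹ʳ) = 1 := by
  ext x
  have hU (y : N) : schurComplement A U T V (A⁻¹ʳ (U y)) =
      U (T⁻¹ʳ (schurComplement T V A U y)) :=
    LinearMap.congr_fun (schurComplement_comp_ringInverse_comp hA hT) y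
  have hx : schurComplement A U T V (A⁻¹ʳ x) = x - U (T⁻¹ʳ (V (A⁻¹ʳ x))) := by
    simp only [schurComplement, LinearMap.sub_apply, LinearMap.comp_apply,
      apply_ringInverse_apply hA]
  simp only [Module.End.mul_apply, LinearMap.add_apply, LinearMap.comp_apply, map_add, hU, hx,
    apply_ringInverse_apply hS, sub_add_cancel, Module.End.one_apply]

theorem mul_schurComplement_eq_one (hA : IsUnit A) (hT : IsUnit T)
    (hS : IsUnit (schurComplement T V A U)) :
    (A⁻¹ʳ + A⁻¹ʳ ∘ₗ U ∘ₗ (schurComplement T V A U)⁻¹ʳ ∘ₗ V ∘ₗ A⁻¹ʳ) *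
      schurComplement A U T V = 1 := by
  ext x
  have hV : V (A⁻¹ʳ (schurComplement A U T V x)) = schurComplement T V A U (T⁻¹ʳ (V x)) :=
    (LinearMap.congr_fun (schurComplement_comp_ringInverse_comp hT hA) x).symm
  have hx : A⁻¹ʳ (schurComplement A U T V x) = x - A⁻¹ʳ (U (T⁻¹ʳ (V x))) := by
    simp only [schurComplement, LinearMap.sub_apply, LinearMap.comp_apply, map_sub,
      ringInverse_apply_apply hA]
  simp only [Module.End.mul_apply, LinearMap.add_apply, LinearMap.comp_apply, hV,
    ringInverse_apply_apply hS]
  rw [hx, sub_add_cancel, Module.End.one_apply]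

theorem isUnit_schurComplement (hA : IsUnit A) (hT : IsUnit T)
    (hS : IsUnit (schurComplement T V A U)) : IsUnit (schurComplement A U T V) :=
  isUnit_iff_exists.2
    ⟨_, schurComplement_mul_eq_one hA hT hS, mul_schurComplement_eq_one hA hT hS⟩

theorem ringInverse_schurComplement (hA : IsUnit A) (hT : IsUnit T)
    (hS : IsUnit (schurComplement T V A U)) :
    (schurComplement A U T V)⁻¹ʳ =
      A⁻¹ʳ + A⁻¹ʳ ∘ₗ U ∘ₗ (schurComplement T V A U)⁻¹ʳ ∘ₗ V ∘ₗ A⁻¹ʳ :=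
  left_inv_eq_right_inv
    (Ring.inverse_mul_cancel _ (isUnit_schurComplement hA hT hS))
    (schurComplement_mul_eq_one hA hT hS)

end SchurComplement

section PushThrough

variable {R M N : Type*} [Ring R] [AddCommGroup M] [Module R M] [AddCommGroup N] [Module R N]
  {F : Module.End R M} {K : Module.End R N} {Q : M →ₗ[R] N} {Q' : N →ₗ[R] M}

theorem isUnit_ringInverse_add_comp_ringInverse_comp (hF : IsUnit F) (hK : IsUnit K)
    (hA : IsUnit (Q' ∘ₗ K ∘ₗ Q + F)) : IsUnit (K⁻¹ʳ + Q ∘ₗ F⁻¹ʳ ∘ₗ Q') := by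
  have hS : schurComplement F Q' K⁻¹ʳ (-Q) = Q' ∘ₗ K ∘ₗ Q + F := by
    simp only [schurComplement, Ring.inverse_inverse hK, LinearMap.comp_neg, sub_neg_eq_add,
      add_comm]
  have hB : schurComplement K⁻¹ʳ (-Q) F Q' = K⁻¹ʳ + Q ∘ₗ F⁻¹ʳ ∘ₗ Q' := by
    rw [schurComplement, LinearMap.neg_comp, sub_neg_eq_add]
  exact hB ▸ isUnit_schurComplement hK.ringInverse hF (hS ▸ hA)

theorem push_through (hF : IsUnit F) (hK : IsUnit K)
    (hA : IsUnit (Q' ∘ₗ K ∘ₗ Q + F)) :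
    F ∘ₗ (Q' ∘ₗ K ∘ₗ Q + F)⁻¹ʳ ∘ₗ Q' ∘ₗ K = Q' ∘ₗ (K⁻¹ʳ + Q ∘ₗ F⁻¹ʳ ∘ₗ Q')⁻¹ʳ := by
  have hcomm : (Q' ∘ₗ K) ∘ₗ (K⁻¹ʳ + Q ∘ₗ F⁻¹ʳ ∘ₗ Q') =
      (Q' ∘ₗ K ∘ₗ Q + F) ∘ₗ F⁻¹ʳ ∘ₗ Q' := by
    ext y
    simp only [LinearMap.comp_apply, LinearMap.add_apply, map_add, apply_ringInverse_apply hK,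
      apply_ringInverse_apply hF, add_comm]
  rw [ringInverse_comp_eq_comp_ringInverse hA
    (isUnit_ringInverse_add_comp_ringInverse_comp hF hK hA) hcomm]
  ext y
  simp only [LinearMap.comp_apply, apply_ringInverse_apply hF]

theorem sub_comp_ringInverse_add_comp (hF : IsUnit F) (hK : IsUnit K)
    (hA : IsUnit (Q' ∘ₗ K ∘ₗ Q + F)) :
    F - F ∘ₗ (Q' ∘ₗ K ∘ₗ Q + F)⁻¹ʳ ∘ₗ F = Q' ∘ₗ (K⁻¹ʳ + Q ∘ₗ F⁻¹ʳ ∘ₗ Q')⁻¹ʳ ∘ₗ Q := by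
  set A := Q' ∘ₗ K ∘ₗ Q + F with hAdef
  calc F - F ∘ₗ A⁻¹ʳ ∘ₗ F = F ∘ₗ A⁻¹ʳ ∘ₗ (A - F) := by
        ext x
        simp only [LinearMap.sub_apply, LinearMap.comp_apply, map_sub, ringInverse_apply_apply hA]
    _ = (F ∘ₗ A⁻¹ʳ ∘ₗ Q' ∘ₗ K) ∘ₗ Q := by
        rw [hAdef, add_sub_cancel_right]; rfl
    _ = Q' ∘ₗ (K⁻¹ʳ + Q ∘ₗ F⁻¹ʳ ∘ₗ Q')⁻¹ʳ ∘ₗ Q := by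
        rw [push_through hF hK hA, LinearMap.comp_assoc]

end PushThrough

section Positive

variable {𝕜 E : Type*} [RCLike 𝕜] [NormedAddCommGroup E] [InnerProductSpace 𝕜 E]
  [FiniteDimensional 𝕜 E]

theorem isUnit_of_inner_map_self_ne_zero_s18 {A : Module.End 𝕜 E}
    (hA : ∀ x, x ≠ 0 → inner 𝕜 (A x) x ≠ 0) : IsUnit A := by
  rw [LinearMap.isUnit_iff_ker_eq_bot, LinearMap.ker_eq_bot']
  intro x hx
  by_contra hne
  exact hA x hne (by rw [hx, inner_zero_left])

theorem isUnit_add_of_isPositive {P F : Module.End 𝕜 E} (hP : P.IsPositive)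
    (hF : ∀ x, x ≠ 0 → 0 < RCLike.re (inner 𝕜 (F x) x)) : IsUnit (P + F) := by
  refine isUnit_of_inner_map_self_ne_zero_s18 fun x hx h ↦ ?_
  have hpos := add_pos_of_nonneg_of_pos (hP.re_inner_nonneg_left x) (hF x hx)
  rw [← map_add, ← inner_add_left, ← LinearMap.add_apply, h, map_zero] at hpos
  exact hpos.false

end Positive

theorem stmt_18_general
    {R Hm H Hp : Type*} [Ring R] [AddCommGroup Hm] [Module R Hm] [AddCommGroup H] [Module R H]
    [AddCommGroup Hp] [Module R Hp]
    {Qm : Hm →ₗ[R] H} {Qm' : H →ₗ[R] Hm} {Q : H →ₗ[R] Hp} {Q' : Hp →ₗ[R] H}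
    {K Qfc : Module.End R Hp} {Qf : Module.End R H} {D : Module.End R Hm}
    (hK : IsUnit K) (hQf : IsUnit Qf) (hA : IsUnit (Q' ∘ₗ K ∘ₗ Q + Qf))
    (hQfc : Qfc = (K⁻¹ʳ + Q ∘ₗ Qf⁻¹ʳ ∘ₗ Q')⁻¹ʳ)
    (hDQ : IsUnit (D + Qm' ∘ₗ Qf ∘ₗ Qm))
    (hDQc : IsUnit (D + (Qm' ∘ₗ Q') ∘ₗ Qfc ∘ₗ Q ∘ₗ Qm)) :
    (Qf - Qf ∘ₗ Qm ∘ₗ (D + Qm' ∘ₗ Qf ∘ₗ Qm)⁻¹ʳ ∘ₗ Qm' ∘ₗ Qf + Q' ∘ₗ K ∘ₗ Q)⁻¹ʳ ∘ₗ Q' ∘ₗ K =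
      (Q' ∘ₗ K ∘ₗ Q + Qf)⁻¹ʳ ∘ₗ
        (Q' ∘ₗ K + Qf ∘ₗ Qm ∘ₗ (D + (Qm' ∘ₗ Q') ∘ₗ Qfc ∘ₗ Q ∘ₗ Qm)⁻¹ʳ ∘ₗ
          (Qm' ∘ₗ Q') ∘ₗ Qfc) := by
  have hpush := push_through hQf hK hA
  have hred := sub_comp_ringInverse_add_comp hQf hK hA
  rw [← hQfc] at hpush hred
  set A := Q' ∘ₗ K ∘ₗ Q + Qf with hAdef
  set T := D + Qm' ∘ₗ Qf ∘ₗ Qm with hT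
  have hΔ : Qf - Qf ∘ₗ Qm ∘ₗ T⁻¹ʳ ∘ₗ Qm' ∘ₗ Qf + Q' ∘ₗ K ∘ₗ Q =
      schurComplement A (Qf ∘ₗ Qm) T (Qm' ∘ₗ Qf) := by
    rw [schurComplement, LinearMap.comp_assoc, hAdef]
    abel
  have hDc : schurComplement T (Qm' ∘ₗ Qf) A (Qf ∘ₗ Qm) =
      D + (Qm' ∘ₗ Q') ∘ₗ Qfc ∘ₗ Q ∘ₗ Qm := by
    calc schurComplement T (Qm' ∘ₗ Qf) A (Qf ∘ₗ Qm)
        = D + Qm' ∘ₗ (Qf - Qf ∘ₗ A⁻¹ʳ ∘ₗ Qf) ∘ₗ Qm := by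
          rw [schurComplement, hT, LinearMap.sub_comp, LinearMap.comp_sub, add_sub_assoc]; rfl
      _ = D + (Qm' ∘ₗ Q') ∘ₗ Qfc ∘ₗ Q ∘ₗ Qm := by rw [hred]; rfl
  rw [← hDc] at hDQc ⊢
  rw [hΔ, ringInverse_schurComplement hA hDQ hDQc]
  ext y
  have hy := LinearMap.congr_fun hpush y
  simp only [LinearMap.comp_apply] at hy
  simp only [LinearMap.comp_apply, LinearMap.add_apply, map_add, hy]

/-- Remark, part (e): `b C Q* = (b Q*Q + 𝔔)⁻¹ (b Q* + 𝔔 Q₋ Š Q̌₋* 𝔔̌)`. -/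
theorem stmt_18
    {Hm H Hp : Type*}
    [NormedAddCommGroup Hm] [InnerProductSpace ℝ Hm] [FiniteDimensional ℝ Hm]
    [NormedAddCommGroup H] [InnerProductSpace ℝ H] [FiniteDimensional ℝ H]
    [NormedAddCommGroup Hp] [InnerProductSpace ℝ Hp] [FiniteDimensional ℝ Hp]
    (Qm : Hm →ₗ[ℝ] H) (Q : H →ₗ[ℝ] Hp)
    (b : ℝ) (hb : 0 < b)
    (Qf : Module.End ℝ H) (hQfsym : Qf.IsSymmetric)
    (hQfpos : ∀ x : H, x ≠ 0 → 0 < ⟪Qf x, x⟫)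
    (Qfc : Module.End ℝ Hp)
    (hQfc : Qfc = Ring.inverse
      (b⁻¹ • (1 : Module.End ℝ Hp)
        + Q ∘ₗ Ring.inverse Qf ∘ₗ LinearMap.adjoint Q))
    (D : Module.End ℝ Hm)
    (hDQ : IsUnit (D + LinearMap.adjoint Qm ∘ₗ Qf ∘ₗ Qm))
    (hDQc : IsUnit (D + LinearMap.adjoint (Q ∘ₗ Qm) ∘ₗ Qfc ∘ₗ (Q ∘ₗ Qm)))
    (S : Module.End ℝ Hm)
    (hS : S = Ring.inverse (D + LinearMap.adjoint Qm ∘ₗ Qf ∘ₗ Qm))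
    (Sc : Module.End ℝ Hm)
    (hSc : Sc = Ring.inverse (D + LinearMap.adjoint (Q ∘ₗ Qm) ∘ₗ Qfc ∘ₗ (Q ∘ₗ Qm)))
    (hD : IsUnit D)
    (Δ : Module.End ℝ H)
    (hΔ : Δ = Qf - Qf ∘ₗ Qm ∘ₗ S ∘ₗ LinearMap.adjoint Qm ∘ₗ Qf)
    (hΔb : IsUnit (Δ + b • (LinearMap.adjoint Q ∘ₗ Q)))
    (C : Module.End ℝ H)
    (hC : C = Ring.inverse (Δ + b • (LinearMap.adjoint Q ∘ₗ Q))) :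
    b • (C ∘ₗ LinearMap.adjoint Q)
      = Ring.inverse (b • (LinearMap.adjoint Q ∘ₗ Q) + Qf)
          ∘ₗ (b • LinearMap.adjoint Q
              + Qf ∘ₗ Qm ∘ₗ Sc ∘ₗ LinearMap.adjoint (Q ∘ₗ Qm) ∘ₗ Qfc) := by
  have hQf : IsUnit Qf := isUnit_of_inner_map_self_ne_zero_s18 fun x hx ↦ (hQfpos x hx).ne'
  have hA : IsUnit (b • (LinearMap.adjoint Q ∘ₗ Q) + Qf) :=
    isUnit_add_of_isPositive (Q.isPositive_adjoint_comp_self.smul_of_nonneg hb.le) hQfpos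
  have hK : IsUnit (b • (1 : Module.End ℝ Hp)) := isUnit_one.smul (Units.mk0 b hb.ne')
  have hQK : LinearMap.adjoint Q ∘ₗ (b • 1) = b • LinearMap.adjoint Q := by
    rw [LinearMap.comp_smul, Module.End.one_eq_id, LinearMap.comp_id]
  have hQKQ : LinearMap.adjoint Q ∘ₗ (b • 1) ∘ₗ Q = b • (LinearMap.adjoint Q ∘ₗ Q) := by
    rw [← LinearMap.comp_assoc, hQK, LinearMap.smul_comp]
  rw [LinearMap.adjoint_comp] at hDQc hSc ⊢
  rw [← ringInverse_smul_one] at hQfc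
  rw [← hQKQ] at hA
  have hformula := stmt_18_general hK hQf hA hQfc hDQ hDQc
  rwa [hQKQ, hQK, ← hS, ← hSc, ← hΔ, ← hC, LinearMap.comp_smul] at hformula
end
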